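/- Fix k > 0, c > 0, t ∈ ℝ, F ∈ ℝ, and z0 ∈ ℝ. Suppose R : ℝ → ℝ is differentiable and satisfies, for all q, z0 = R(q) + (1/k)·e^{k(R(q) − F)}·cos(k(q − c·t)), and suppose e^{k(R(q) − F)} < 1 for all q. Then R'(q) = 0 if and only if sin(k(q − c·t)) = 0; moreover at any such critical point q* one has z0 = R(q*) ± (1/k)·e^{k(R(q*) − F)} (with sign + when cos(k(q* − ct)) = 1 and sign − when cos(k(q* − ct)) = −1). -/

import Mathlib

/-!
Along a fixed depth, differentiating `r + (1/k) e^{k(r - F)} cos θ = z₀` with `r = R(q)` and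
`θ = θ(q)` gives `R' (1 + e^{k(R - F)} cos θ) = (θ'/k) e^{k(R - F)} sin θ`. Since
`e^{k(R - F)} < 1`, the factor multiplying `R'` is positive, so for `θ' ≠ 0` the zeros of `R'` are
those of `sin θ`.
-/

section

open Real Topology

/-- The height, in the equatorially trapped wave, of the particle with vertical label `r` at the
phase `θ`, which is `k (q - c t)` for horizontal label `q` at time `t`; the latitude enters only
through `F`. -/
noncomputable def particleHeight (k F θ r : ℝ) : ℝ :=
  r + (1 / k) * exp (k * (r - F)) * cos θ

theorem one_add_mul_cos_pos {a : ℝ} (ha : |a| < 1) (φ : ℝ) : 0 < 1 + a * cos φ := by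
  have h_abs : |a * cos φ| ≤ |a| := by
    rw [abs_mul]
    exact mul_le_of_le_one_right (abs_nonneg a) (abs_cos_le_one φ)
  linarith [neg_abs_le (a * cos φ)]

variable {k F z₀ R' θ' q : ℝ} {R θ : ℝ → ℝ}

theorem hasDerivAt_particleHeight (hk : k ≠ 0) (hθ : HasDerivAt θ θ' q) (hR : HasDerivAt R R' q) :
    HasDerivAt (fun x ↦ particleHeight k F (θ x) (R x))
      (R' * (1 + exp (k * (R q - F)) * cos (θ q)) -
        θ' / k * (exp (k * (R q - F)) * sin (θ q))) q := by
  have h_exp : HasDerivAt (fun x ↦ exp (k * (R x - F))) (exp (k * (R q - F)) * (k * R')) q :=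
    ((hR.sub_const F).const_mul k).exp
  have h_sum := hR.add ((h_exp.const_mul (1 / k)).mul hθ.cos)
  refine h_sum.congr_deriv ?_
  field_simp
  ring

theorem mul_one_add_exp_mul_cos_eq_of_particleHeight_eventuallyEq_const (hk : k ≠ 0)
    (hθ : HasDerivAt θ θ' q) (hR : HasDerivAt R R' q)
    (h : (fun x ↦ particleHeight k F (θ x) (R x)) =ᶠ[𝓝 q] fun _ ↦ z₀) :
    R' * (1 + exp (k * (R q - F)) * cos (θ q)) = θ' / k * (exp (k * (R q - F)) * sin (θ q)) :=
  sub_eq_zero.mp <|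
    (hasDerivAt_particleHeight hk hθ hR).unique ((hasDerivAt_const q z₀).congr_of_eventuallyEq h)

theorem deriv_eq_zero_iff_of_particleHeight_eventuallyEq_const (hk : k ≠ 0)
    (hθ : HasDerivAt θ θ' q) (hθ' : θ' ≠ 0) (hR : DifferentiableAt ℝ R q)
    (h : (fun x ↦ particleHeight k F (θ x) (R x)) =ᶠ[𝓝 q] fun _ ↦ z₀)
    (hlt : exp (k * (R q - F)) < 1) : deriv R q = 0 ↔ sin (θ q) = 0 := by
  have h_factor : 1 + exp (k * (R q - F)) * cos (θ q) ≠ 0 :=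
    (one_add_mul_cos_pos (by rwa [abs_exp]) (θ q)).ne'
  rw [← mul_eq_zero_iff_right h_factor,
    mul_one_add_exp_mul_cos_eq_of_particleHeight_eventuallyEq_const hk hθ hR.hasDerivAt h,
    mul_eq_zero_iff_left (div_ne_zero hθ' hk), mul_eq_zero_iff_left (exp_ne_zero _)]

theorem stmt6_general (hk : k ≠ 0) (hθ : HasDerivAt θ θ' q) (hθ' : θ' ≠ 0)
    (hR : DifferentiableAt ℝ R q)
    (heq : ∀ᶠ x in 𝓝 q, z₀ = R x + (1 / k) * exp (k * (R x - F)) * cos (θ x))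
    (hlt : exp (k * (R q - F)) < 1) :
    (deriv R q = 0 ↔ sin (θ q) = 0) ∧
      (cos (θ q) = 1 → z₀ = R q + (1 / k) * exp (k * (R q - F))) ∧
      (cos (θ q) = -1 → z₀ = R q - (1 / k) * exp (k * (R q - F))) := by
  have hq := heq.self_of_nhds
  have h_const := heq.mono fun _ hx ↦ hx.symm
  refine ⟨deriv_eq_zero_iff_of_particleHeight_eventuallyEq_const hk hθ hθ' hR h_const hlt,
    fun h_crest ↦ ?_, fun h_trough ↦ ?_⟩
  · rwa [h_crest, mul_one] at hq
  · rwa [h_trough, mul_neg_one, ← sub_eq_add_neg] at hq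

end

/-- The label function `R(q)` describing a fixed depth has critical points exactly where
`sin(k(q − ct)) = 0`, and at such points `z0 = R ± (1/k)·e^{k(R − F)}`. -/
theorem stmt6 (k c t F z0 : ℝ) (hk : 0 < k) (hc : 0 < c)
    (R : ℝ → ℝ) (hR : Differentiable ℝ R)
    (heq : ∀ q, z0 = R q + (1 / k) * Real.exp (k * (R q - F)) * Real.cos (k * (q - c * t)))
    (hlt : ∀ q, Real.exp (k * (R q - F)) < 1) :
    ∀ q, (deriv R q = 0 ↔ Real.sin (k * (q - c * t)) = 0) ∧
      (deriv R q = 0 →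
        (Real.cos (k * (q - c * t)) = 1 →
          z0 = R q + (1 / k) * Real.exp (k * (R q - F))) ∧
        (Real.cos (k * (q - c * t)) = -1 →
          z0 = R q - (1 / k) * Real.exp (k * (R q - F)))) := by
  intro q
  obtain ⟨h_iff, h_extrema⟩ := stmt6_general hk.ne'
    ((hasDerivAt_const_mul k).comp_sub_const q (c * t)) hk.ne' (hR q) (.of_forall heq) (hlt q)
  exact ⟨h_iff, fun _ ↦ h_extrema⟩
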